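/- arXiv:2009.10602 — 3 statements merged into one kernel-verified Lean document; each statement's English description precedes it below -/
import Mathlib

section
/- Let G be a finite group, p a prime, and F an algebraically closed field of characteristic p. If every simple FG-module is finite-dimensional of dimension strictly less than p, then G has a normal Sylow p-subgroup. -/
namespace NormalSylowAux

/-- Splitting a nonempty vector into head and tail. -/
def vecConsEquiv (ι : Type) (n : ℕ) : List.Vector ι (n + 1) ≃ ι × List.Vector ι n where
  toFun v := (v.head, v.tail)
  invFun x := List.Vector.cons x.1 x.2
  left_inv v := by simp
  right_inv x := by simp

/-- Noncommutative expansion of a power of a sum. -/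
theorem sum_pow_vec {R : Type} [Ring R] {ι : Type} [Fintype ι] (a : ι → R) (n : ℕ) :
    (∑ i, a i) ^ n = ∑ v : List.Vector ι n, (v.toList.map a).prod := by
  induction n with
  | zero =>
    simp [card_vector]
  | succ n ih =>
    rw [pow_succ', ih, ← Equiv.sum_comp (vecConsEquiv ι n).symm, Fintype.sum_prod_type,
      Finset.sum_mul_sum]
    refine Finset.sum_congr rfl fun i _ => Finset.sum_congr rfl fun v _ => ?_
    simp [vecConsEquiv]

/-- Vectors of indices such that the product of the corresponding group elements is one. -/
abbrev Vecs {G : Type} [Group G] {ι : Type} (f : ι → G) (n : ℕ) : Type :=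
  {v : List.Vector ι n // (v.toList.map f).prod = 1}

/-- Rotation on such vectors. -/
def rot {G : Type} [Group G] {ι : Type} (f : ι → G) (n : ℕ) (k : ℕ) (v : Vecs f n) : Vecs f n :=
  ⟨⟨v.1.1.rotate k, (v.1.1.length_rotate k).trans v.1.2⟩, by
    have h := List.prod_rotate_eq_one_of_prod_eq_one v.2 k
    rw [← List.map_rotate] at h
    exact h⟩

theorem card_vecs {G : Type} [Group G] [DecidableEq G] {ι : Type} [Fintype ι] [DecidableEq ι]
    (f : ι → G) (p k : ℕ) [hp : Fact p.Prime] :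
    Fintype.card (Vecs f (p ^ k)) ≡ Fintype.card {i : ι // f i ^ p ^ k = 1} [MOD p] := by
  classical
  have hq : p ^ k ≠ 0 := pow_ne_zero _ hp.out.ne_zero
  let r : Function.End (Vecs f (p ^ k)) := rot f (p ^ k) 1
  have hr : ∀ m : ℕ, r ^ m = rot f (p ^ k) m := by
    intro m
    induction m with
    | zero =>
      funext v
      exact (Subtype.ext (Subtype.ext v.1.1.rotate_zero)).symm
    | succ m ih =>
      rw [pow_succ', ih]
      funext v
      exact Subtype.ext (Subtype.ext (List.rotate_rotate v.1.1 m 1))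
  have h1 : r ^ p ^ k = 1 := by
    rw [hr]
    funext v
    refine Subtype.ext (Subtype.ext ?_)
    have h2 := List.rotate_length (l := v.1.1)
    rw [v.1.2] at h2
    exact h2
  have h2 := Equiv.Perm.card_fixedPoints_modEq h1
  refine h2.trans ?_
  have e : Function.Bijective (fun i : {i : ι // f i ^ p ^ k = 1} =>
      (⟨⟨List.Vector.replicate (p ^ k) i.1, by
        have := i.2
        simpa [List.Vector.replicate, List.Vector.toList] using this⟩,
        Subtype.ext (Subtype.ext (List.rotate_replicate i.1 (p ^ k) 1))⟩ :
        Function.fixedPoints r)) := by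
    constructor
    · intro i j h
      have h3 : List.replicate (p ^ k) i.1 = List.replicate (p ^ k) j.1 :=
        congrArg (fun v => v.1.1.1) h
      exact Subtype.ext (List.replicate_right_injective hq h3)
    · rintro ⟨⟨v, hv⟩, hf⟩
      have h3 : v.1.rotate 1 = v.1 := congrArg (fun v => v.1.1) hf
      have hlen : v.1.length = p ^ k := v.2
      haveI : Nonempty ι := ⟨v.1.get ⟨0, by omega⟩⟩
      obtain ⟨a, ha⟩ := List.rotate_one_eq_self_iff_eq_replicate.mp h3
      rw [hlen] at ha
      have hv2 : (v.1.map f).prod = 1 := hv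
      rw [ha, List.map_replicate, List.prod_replicate] at hv2
      exact ⟨⟨a, hv2⟩, Subtype.ext (Subtype.ext (Subtype.ext ha.symm))⟩
  rw [Fintype.card_of_bijective e]

theorem nilp_card {F : Type} [Field F] {G : Type} [Group G] (p : ℕ) [hp : Fact p.Prime]
    [CharP F p] {ι : Type} [Fintype ι] [DecidableEq ι] [DecidableEq G] (f : ι → G) (k : ℕ)
    (h : (∑ i, MonoidAlgebra.of F G (f i)) ^ p ^ k = 0) :
    p ∣ Fintype.card {i : ι // f i ^ p ^ k = 1} := by
  classical
  rw [← (card_vecs f p k).dvd_iff dvd_rfl, ← CharP.cast_eq_zero_iff F p]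
  rw [sum_pow_vec] at h
  have h2 : ∀ v : List.Vector ι (p ^ k), (v.toList.map fun i => MonoidAlgebra.of F G (f i)).prod
      = MonoidAlgebra.of F G (v.toList.map f).prod := by
    intro v
    rw [map_list_prod, List.map_map]
    rfl
  simp_rw [h2] at h
  have h3 := congrArg (fun a => a.coeff (1 : G)) h
  rw [Fintype.card_subtype, Finset.card_filter]
  push_cast
  simpa [Finsupp.finsetSum_apply, Finsupp.single_apply, MonoidAlgebra.single_apply] using h3

theorem geom_char {R : Type} [Ring R] (p : ℕ) [hp : Fact p.Prime] [CharP R p] (x : R) :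
    ∑ i : Fin p, x ^ (i : ℕ) = (x - 1) ^ (p - 1) := by
  have h : (∑ i ∈ Finset.range p, (Polynomial.X : Polynomial (ZMod p)) ^ i)
      = (Polynomial.X - 1) ^ (p - 1) := by
    have h1 : (Polynomial.X - 1 : Polynomial (ZMod p)) ≠ 0 := Polynomial.X_sub_C_ne_zero 1
    apply mul_right_cancel₀ h1
    rw [geom_sum_mul, ← pow_succ, Nat.sub_add_cancel hp.out.one_le, sub_pow_char, one_pow]
  letI := ZMod.algebra R p
  have h2 := congrArg (Polynomial.aeval x) h
  rw [Fin.sum_univ_eq_sum_range (fun i => x ^ i)]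
  simpa using h2

theorem unip {F V : Type} [Field F] [AddCommGroup V] [Module F V] [FiniteDimensional F V]
    (p : ℕ) (hV : Module.finrank F V < p) (T : Module.End F V) (hT : IsNilpotent T) :
    T ^ (p - 1) = 0 := by
  obtain ⟨m, hm⟩ := hT
  have h1 := Module.End.ker_pow_le_ker_pow_finrank T m
  rw [hm, LinearMap.ker_zero, top_le_iff, LinearMap.ker_eq_top] at h1
  exact pow_eq_zero_of_le (by omega) h1

end NormalSylowAux

open NormalSylowAux

/-- Let `G` be a finite group, `p` a prime, and `F` an algebraically
closed field of characteristic `p`.  If every simple `FG`-module is finite-dimensional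
over `F` of dimension strictly less than `p`, then `G` has a normal Sylow `p`-subgroup. -/
theorem normal_sylow_of_simple_modules_small
    (p : ℕ) (hp : p.Prime)
    (F : Type) [Field F] [IsAlgClosed F] [CharP F p]
    (G : Type) [Group G] [Finite G]
    (hdim : ∀ (V : Type) [AddCommGroup V] [Module (MonoidAlgebra F G) V]
      [Module F V] [IsScalarTower F (MonoidAlgebra F G) V],
      IsSimpleModule (MonoidAlgebra F G) V →
        FiniteDimensional F V ∧ Module.finrank F V < p) :
    ∃ P : Sylow p G, (P : Subgroup G).Normal := by
  classical
  haveI : Fact p.Prime := ⟨hp⟩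
  haveI : CharP (MonoidAlgebra F G) p := charP_of_injective_algebraMap
    (algebraMap F (MonoidAlgebra F G)).injective p
  haveI : Module.Finite F (MonoidAlgebra F G) := inferInstance
  haveI : IsArtinianRing (MonoidAlgebra F G) := IsArtinianRing.of_finite F _
  -- the geometric sum of a `p`-element lies in the radical
  have key : ∀ x g : G, (∃ n, x ^ p ^ n = 1) →
      IsNilpotent (∑ i : Fin p, MonoidAlgebra.of F G (x ^ (i : ℕ) * g)) := by
    rintro x g ⟨n, hx⟩
    have h0 : (∑ i : Fin p, MonoidAlgebra.of F G (x ^ (i : ℕ) * g))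
        = (MonoidAlgebra.of F G x - 1) ^ (p - 1) * MonoidAlgebra.of F G g := by
      rw [← geom_char, Finset.sum_mul]
      simp only [map_mul, map_pow]
    have hnil : (MonoidAlgebra.of F G x - 1) ^ p ^ n = 0 := by
      rw [sub_pow_char_pow_of_commute _ _ (Commute.one_right _), ← map_pow, hx, map_one, one_pow, sub_self]
    have hmem : (∑ i : Fin p, MonoidAlgebra.of F G (x ^ (i : ℕ) * g))
        ∈ Ring.jacobson (MonoidAlgebra F G) := by
      rw [Ring.jacobson_eq_sInf_isMaximal, Submodule.mem_sInf]
      intro m hm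
      have hs : IsSimpleModule (MonoidAlgebra F G) (MonoidAlgebra F G ⧸ m) :=
        isSimpleModule_iff_isCoatom.mpr hm.out.out
      obtain ⟨hfd, hlt⟩ := hdim (MonoidAlgebra F G ⧸ m) hs
      let T : Module.End F (MonoidAlgebra F G ⧸ m) :=
        Algebra.lsmul F F (MonoidAlgebra F G ⧸ m) (MonoidAlgebra.of F G x - 1)
      have hT : IsNilpotent T := ⟨p ^ n, by rw [← map_pow, hnil, map_zero]⟩
      have hT2 := unip p hlt T hT
      rw [← map_pow] at hT2
      have h3 := LinearMap.congr_fun hT2 (Submodule.Quotient.mk (MonoidAlgebra.of F G g))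
      rw [h0, ← Submodule.Quotient.mk_eq_zero m]
      exact h3
    obtain ⟨N, hN⟩ := IsSemiprimaryRing.isNilpotent (R := MonoidAlgebra F G)
    refine ⟨N, ?_⟩
    have := Ideal.pow_mem_pow hmem N
    rw [hN] at this
    exact this
  have hmul : ∀ x g : G, (∃ n, x ^ p ^ n = 1) → (∃ n, g ^ p ^ n = 1) →
      ∃ n, (x * g) ^ p ^ n = 1 := by
    rintro x g hx ⟨n, hg⟩
    obtain ⟨N, hN⟩ := key x g hx
    have hz : (∑ i : Fin p, MonoidAlgebra.of F G (x ^ (i : ℕ) * g)) ^ p ^ (n + N) = 0 :=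
      pow_eq_zero_of_le ((Nat.le_add_left N n).trans (Nat.lt_pow_self hp.one_lt).le) hN
    have hd := nilp_card p (fun i : Fin p => x ^ (i : ℕ) * g) (n + N) hz
    have hpos : 0 < Fintype.card {i : Fin p // (x ^ (i : ℕ) * g) ^ p ^ (n + N) = 1} :=
      Fintype.card_pos_iff.mpr ⟨⟨⟨0, hp.pos⟩, by
        simp [pow_add, pow_mul, hg]⟩⟩
    have hle := Nat.le_of_dvd hpos hd
    have hall : ∀ i : Fin p, (x ^ (i : ℕ) * g) ^ p ^ (n + N) = 1 := by
      by_contra hcon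
      push Not at hcon
      obtain ⟨i, hi⟩ := hcon
      have := Fintype.card_subtype_lt (p := fun i : Fin p => (x ^ (i : ℕ) * g) ^ p ^ (n + N) = 1) hi
      rw [Fintype.card_fin] at this
      omega
    have := hall ⟨1, hp.one_lt⟩
    exact ⟨n + N, by simpa using this⟩
  let H : Subgroup G :=
    { carrier := {x | ∃ n, x ^ p ^ n = 1}
      mul_mem' := fun {a b} ha hb => hmul a b ha hb
      one_mem' := ⟨0, one_pow _⟩
      inv_mem' := by
        rintro a ⟨n, hn⟩
        exact ⟨n, by rw [inv_pow, hn, inv_one]⟩ }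
  have hH : IsPGroup p H := by
    rintro ⟨a, n, hn⟩
    exact ⟨n, Subtype.ext hn⟩
  have hN : H.Normal := ⟨by
    rintro a ⟨n, hn⟩ g
    exact ⟨n, by rw [conj_pow, hn]; simp⟩⟩
  refine ⟨⟨H, hH, ?_⟩, hN⟩
  intro Q hQ hHQ
  refine le_antisymm (fun y hy => ?_) hHQ
  obtain ⟨n, hn⟩ := hQ ⟨y, hy⟩
  exact ⟨n, congrArg Subtype.val hn⟩
end

section
/- Let G be a finite group, p a prime, F a field of characteristic p, and P a Sylow p-subgroup of G. Then the dimension over F of every finite-dimensional projective FG-module is divisible by |P|; in particular, every nonzero projective FG-module has dimension at least |P|. -/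
/-- A `p`-group acting on a nonzero stable subspace in characteristic `p` has a nonzero
fixed vector. -/
theorem aux_exists_fixed (p : ℕ) (hp : p.Prime) {F : Type} [Field F] [CharP F p]
    {Q : Type} [Group Q] [Finite Q] (hQ : IsPGroup p Q)
    {M : Type} [AddCommGroup M] [Module F M] (ρ : Representation F Q M)
    (U : Submodule F M) (hU : ∀ g, ∀ u ∈ U, ρ g u ∈ U) (hne : U ≠ ⊥) :
    ∃ u ∈ U, u ≠ 0 ∧ ∀ g, ρ g u = u := by
  haveI : Fact p.Prime := ⟨hp⟩
  obtain ⟨v, hvU, hv0⟩ := Submodule.exists_mem_ne_zero_of_ne_bot hne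
  letI : Algebra (ZMod p) F := ZMod.algebra F p
  letI : Module (ZMod p) M := Module.compHom M (algebraMap (ZMod p) F)
  haveI : IsScalarTower (ZMod p) F M := ⟨fun a b m => by
    rw [Algebra.smul_def, mul_smul]; rfl⟩
  let S : Submodule (ZMod p) M := Submodule.span (ZMod p) (Set.range fun g => ρ g v)
  have hSfin : Module.Finite (ZMod p) S :=
    Module.Finite.span_of_finite _ (Set.finite_range _)
  haveI : Finite S := Module.finite_of_finite (ZMod p)
  have hSU : S ≤ U.restrictScalars (ZMod p) := by
    refine Submodule.span_le.2 ?_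
    rintro _ ⟨g, rfl⟩
    exact hU g v hvU
  have hSst : ∀ g, ∀ s ∈ S, ρ g s ∈ S := by
    intro g
    have : S ≤ S.comap ((ρ g).restrictScalars (ZMod p)) := by
      refine Submodule.span_le.2 ?_
      rintro _ ⟨h, rfl⟩
      refine Submodule.subset_span ⟨g * h, ?_⟩
      simp
    exact fun s hs => this hs
  have hvS : v ∈ S := Submodule.subset_span ⟨1, by simp⟩
  letI : MulAction Q S :=
    { smul := fun g s => ⟨ρ g s, hSst g s s.2⟩
      one_smul := fun s => Subtype.ext (by
        change ρ 1 (s : M) = s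
        simp)
      mul_smul := fun g h s => Subtype.ext (by
        change ρ (g * h) (s : M) = ρ g (ρ h s)
        simp) }
  have hdvd : p ∣ Nat.card S := by
    haveI : Nontrivial S := ⟨⟨v, hvS⟩, 0, fun h => hv0 (congrArg Subtype.val h)⟩
    rw [Module.natCard_eq_pow_finrank (K := ZMod p), Nat.card_zmod]
    exact dvd_pow_self _ Module.finrank_pos.ne'
  obtain ⟨b, hb, hb0⟩ := hQ.exists_fixed_point_of_prime_dvd_card_of_fixed_point S hdvd
    (a := 0) (fun g => Subtype.ext (map_zero (ρ g)))
  exact ⟨b, hSU b.2, fun h => hb0 (Subtype.ext h.symm), fun g => congrArg Subtype.val (hb g)⟩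

theorem aux_finrank_le (p : ℕ) (hp : p.Prime) {F : Type} [Field F] [CharP F p]
    {Q : Type} [Group Q] [Finite Q] (hQ : IsPGroup p Q)
    {M : Type} [AddCommGroup M] [Module F M] [FiniteDimensional F M] (ρ : Representation F Q M)
    (U : Submodule F M) (hU : ∀ g, ∀ u ∈ U, ρ g u ∈ U) :
    Module.finrank F U ≤ Nat.card Q * Module.finrank F (U ⊓ ρ.invariants : Submodule F M) := by
  haveI := Fintype.ofFinite Q
  obtain ⟨π, hπ⟩ := (U ⊓ ρ.invariants).subtype.exists_leftInverse_of_injective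
    (Submodule.ker_subtype _)
  let Φ : M →ₗ[F] (Q → (U ⊓ ρ.invariants : Submodule F M)) := LinearMap.pi fun g => π ∘ₗ ρ g
  have hK : U ⊓ LinearMap.ker Φ = ⊥ := by
    by_contra hne
    obtain ⟨u, hu, hu0, hfix⟩ := aux_exists_fixed p hp hQ ρ (U ⊓ LinearMap.ker Φ) (by
      rintro g u ⟨h1, h2⟩
      refine ⟨hU g u h1, ?_⟩
      refine LinearMap.mem_ker.2 (funext fun h => ?_)
      have := congrFun (LinearMap.mem_ker.1 h2) (h * g)
      simpa [Φ] using this) hne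
    have h1 := congrFun (LinearMap.mem_ker.1 hu.2) 1
    have h2 := LinearMap.congr_fun hπ ⟨u, hu.1, hfix⟩
    have h3 : π u = 0 := by simpa [Φ] using h1
    have h4 : π u = ⟨u, hu.1, hfix⟩ := h2
    exact hu0 (congrArg Subtype.val (h4.symm.trans h3))
  have hinj : Function.Injective (Φ ∘ₗ U.subtype) := by
    rw [← LinearMap.ker_eq_bot, LinearMap.ker_eq_bot']
    intro u hu
    have : (u : M) ∈ U ⊓ LinearMap.ker Φ := ⟨u.2, hu⟩
    rw [hK] at this
    exact Subtype.ext this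
  have := LinearMap.finrank_le_finrank_of_injective hinj
  rwa [Module.finrank_pi_fintype, Finset.sum_const, smul_eq_mul, Finset.card_univ,
    ← Nat.card_eq_fintype_card] at this

/-- The action of a subgroup on a module over the group algebra. -/
noncomputable def auxRep {F : Type} [Field F] {G : Type} [Group G] (H : Subgroup G)
    (M : Type) [AddCommGroup M] [Module F M] [Module (MonoidAlgebra F G) M]
    [IsScalarTower F (MonoidAlgebra F G) M] : Representation F H M :=
  (Representation.ofModule' (k := F) (G := G) M).comp H.subtype

theorem auxRep_apply {F : Type} [Field F] {G : Type} [Group G] (H : Subgroup G)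
    (M : Type) [AddCommGroup M] [Module F M] [Module (MonoidAlgebra F G) M]
    [IsScalarTower F (MonoidAlgebra F G) M] (h : H) (m : M) :
    auxRep (F := F) H M h m = (MonoidAlgebra.single (h : G) (1 : F)) • m := by
  simp [auxRep, Representation.ofModule']

theorem aux_invariants_le {F : Type} [Field F] {G : Type} [Group G] [Finite G] (H : Subgroup G)
    (n : ℕ) :
    Module.finrank F (auxRep (F := F) H (Fin n → MonoidAlgebra F G)).invariants ≤ n * H.index := by
  let X := Quotient (QuotientGroup.rightRel H)
  haveI : Fintype X := Fintype.ofFinite _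
  let Ψ : (Fin n → MonoidAlgebra F G) →ₗ[F] (Fin n → X → F) :=
    { toFun := fun m i x => (m i).coeff x.out
      map_add' := fun a b => by ext; simp
      map_smul' := fun a b => by ext; simp }
  have hinj : Function.Injective
      (Ψ ∘ₗ (auxRep (F := F) H (Fin n → MonoidAlgebra F G)).invariants.subtype) := by
    rw [← LinearMap.ker_eq_bot, LinearMap.ker_eq_bot']
    rintro ⟨m, hm⟩ h0
    refine Subtype.ext (funext fun i => MonoidAlgebra.ext (Finsupp.ext fun g => ?_))
    have h1 : (m i).coeff (Quotient.out (Quotient.mk _ g : X)) = 0 :=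
      congrFun (congrFun h0 i) (Quotient.mk _ g)
    have h2 : QuotientGroup.rightRel H (Quotient.out (Quotient.mk _ g : X)) g :=
      Quotient.mk_out g
    rw [QuotientGroup.rightRel_apply] at h2
    have h3 := hm ⟨_, h2⟩
    rw [auxRep_apply] at h3
    have h4 := congrArg (fun y => y.coeff g) (congrFun h3 i)
    simp only [Pi.smul_apply, smul_eq_mul, MonoidAlgebra.coeff_single_mul_apply] at h4
    simp [h1] at h4
    simpa using h4.symm
  have := LinearMap.finrank_le_finrank_of_injective hinj
  have hX : Fintype.card X = H.index := by
    rw [Subgroup.index, ← Nat.card_eq_fintype_card]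
    exact Nat.card_congr (QuotientGroup.quotientRightRelEquivQuotientLeftRel H)
  simpa [Module.finrank_pi_fintype, hX] using this

/-- Let `G` be a finite group, `p` a prime, `F` a field of
characteristic `p`, and `P` a Sylow `p`-subgroup of `G`.  The `F`-dimension of
every finite-dimensional projective `FG`-module is divisible by `|P|`; in
particular, a nonzero such module has dimension at least `|P|`. -/
theorem card_sylow_dvd_finrank_projective
    (p : ℕ) (hp : p.Prime)
    (F : Type) [Field F] [CharP F p]
    (G : Type) [Group G] [Finite G] (P : Sylow p G)
    (V : Type) [AddCommGroup V] [Module (MonoidAlgebra F G) V]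
    [Module F V] [IsScalarTower F (MonoidAlgebra F G) V]
    [FiniteDimensional F V]
    (hproj : Module.Projective (MonoidAlgebra F G) V) :
    Nat.card (P : Subgroup G) ∣ Module.finrank F V ∧
      (Nontrivial V → Nat.card (P : Subgroup G) ≤ Module.finrank F V) := by
  haveI := Fintype.ofFinite G
  have key : Nat.card (P : Subgroup G) ∣ Module.finrank F V := by
    haveI : Module.Finite (MonoidAlgebra F G) V := Module.Finite.of_restrictScalars_finite F _ _
    obtain ⟨n, f, g, -, hg, hfg⟩ :=
      Module.Finite.exists_comp_eq_id_of_projective (MonoidAlgebra F G) V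
    let e : MonoidAlgebra F G ≃ₗ[F] (G →₀ F) :=
      { MonoidAlgebra.coeffAddEquiv with map_smul' := fun a b => by ext; simp }
    haveI : FiniteDimensional F (MonoidAlgebra F G) := Module.Finite.equiv e.symm
    have hdim : Module.finrank F (Fin n → MonoidAlgebra F G) = n * Nat.card G := by
      rw [Module.finrank_pi_fintype]
      simp [e.finrank_eq]
    let M := Fin n → MonoidAlgebra F G
    let f' : M →ₗ[F] V := f.restrictScalars F
    let g' : V →ₗ[F] M := g.restrictScalars F
    let ρ := auxRep (F := F) (P : Subgroup G) M
    have hf'g' : ∀ v, f' (g' v) = v := fun v => LinearMap.congr_fun hfg v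
    have ha := aux_finrank_le p hp P.isPGroup' ρ (LinearMap.range g') (by
      rintro x _ ⟨v, rfl⟩
      refine ⟨MonoidAlgebra.single (x : G) (1 : F) • v, ?_⟩
      rw [auxRep_apply]
      exact map_smul g _ _)
    have hb := aux_finrank_le p hp P.isPGroup' ρ (LinearMap.ker f') (by
      intro x u hu
      rw [LinearMap.mem_ker, auxRep_apply]
      refine (map_smul f _ _).trans ?_
      rw [show f u = 0 from hu, smul_zero])
    have hV : Module.finrank F (LinearMap.range g') = Module.finrank F V :=
      LinearMap.finrank_range_of_inj hg
    have hsum : Module.finrank F (LinearMap.range f') + Module.finrank F (LinearMap.ker f')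
        = n * Nat.card G := (LinearMap.finrank_range_add_finrank_ker f').trans hdim
    have hf' : LinearMap.range f' = ⊤ :=
      LinearMap.range_eq_top.2 fun v => ⟨g' v, hf'g' v⟩
    rw [hf', finrank_top] at hsum
    have hinv := aux_invariants_le (F := F) (P : Subgroup G) n
    set A := LinearMap.range g' ⊓ ρ.invariants with hA
    set B := LinearMap.ker f' ⊓ ρ.invariants with hB
    have hAB : A ⊓ B = ⊥ := by
      rw [eq_bot_iff]
      rintro x ⟨⟨⟨v, rfl⟩, -⟩, ⟨h2, -⟩⟩
      have : v = 0 := (hf'g' v).symm.trans h2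
      simp [this]
    have hle : Module.finrank F A + Module.finrank F B ≤ n * (P : Subgroup G).index := by
      have h1 := Submodule.finrank_sup_add_finrank_inf_eq A B
      rw [hAB, finrank_bot, add_zero] at h1
      rw [← h1]
      exact (Submodule.finrank_mono (sup_le inf_le_right inf_le_right)).trans hinv
    have hcard := (P : Subgroup G).card_mul_index
    refine ⟨Module.finrank F A, ?_⟩
    rw [hV] at ha
    have h5 := Nat.mul_le_mul_left (Nat.card (P : Subgroup G)) hle
    have h6 : Nat.card (P : Subgroup G) * (n * (P : Subgroup G).index) = n * Nat.card G := by
      rw [← hcard]; ring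
    rw [h6, mul_add] at h5
    have ha' : Module.finrank F V ≤ Nat.card (P : Subgroup G) * Module.finrank F A := ha
    have hb' : Module.finrank F (LinearMap.ker f') ≤
      Nat.card (P : Subgroup G) * Module.finrank F B := hb
    omega
  exact ⟨key, fun h => Nat.le_of_dvd Module.finrank_pos key⟩
end

section
/- Let G be a finite group, p a prime, and F an algebraically closed field of characteristic p. Suppose O_p(G) = 1, that p divides |G|, and that every proper section of G (every quotient K = H/N with H ≤ G, N normal in H, and |K| < |G|) has a normal Sylow p-subgroup. Then G has a simple FG-module of dimension at least p. -/
/-- `pRadical p G` is `O_p(G)`, the largest normal `p`-subgroup of `G`. -/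
def pRadical (p : ℕ) (G : Type*) [Group G] : Subgroup G :=
  ⨆ (N : Subgroup G) (_ : N.Normal) (_ : IsPGroup p N), N

open Polynomial in
lemma geom_eq_sub_one_pow (p : ℕ) (hp : p.Prime) (F : Type) [Field F] [CharP F p]
    (A : Type) [Ring A] [Algebra F A] (x : A) :
    ∑ i ∈ Finset.range p, x ^ i = (x - 1) ^ (p - 1) := by
  have := Fact.mk hp
  have h : ∑ i ∈ Finset.range p, (X : F[X]) ^ i = (X - 1) ^ (p - 1) := by
    have hne : (X - 1 : F[X]) ≠ 0 := by
      simpa using X_sub_C_ne_zero (1 : F)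
    apply mul_right_cancel₀ hne
    rw [geom_sum_mul, ← pow_succ, Nat.sub_add_cancel hp.one_le, sub_pow_char]
    simp
  simpa using congrArg (aeval x) h

lemma nilp_pow_finrank (F V : Type) [Field F] [AddCommGroup V] [Module F V]
    [Module.Finite F V] (f : Module.End F V) (hf : IsNilpotent f) (m : ℕ)
    (hm : Module.finrank F V ≤ m) : f ^ m = 0 := by
  have h := f.aeval_self_charpoly
  rw [hf.charpoly_eq_X_pow_finrank] at h
  simp only [map_pow, Polynomial.aeval_X] at h
  exact pow_eq_zero_of_le hm h

/-- Vectors of length `n+1` split into head and tail. -/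
def vecConsEquiv (ι : Type) (n : ℕ) : List.Vector ι (n + 1) ≃ ι × List.Vector ι n where
  toFun v := (v.head, v.tail)
  invFun q := q.1 ::ᵥ q.2
  left_inv v := by simp
  right_inv q := by simp

lemma sum_pow_eq_sum_vector {R ι : Type} [Ring R] [Fintype ι] (h : ι → R) (N : ℕ) :
    (∑ i, h i) ^ N = ∑ v : List.Vector ι N, (v.toList.map h).prod := by
  induction N with
  | zero => simp
  | succ n ih =>
    rw [pow_succ', ih, ← (vecConsEquiv ι n).symm.sum_comp, Fintype.sum_prod_type,
      Finset.sum_mul]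
    refine Finset.sum_congr rfl fun i _ => ?_
    rw [Finset.mul_sum]
    refine Finset.sum_congr rfl fun v _ => ?_
    simp [vecConsEquiv]

/-- Tuples whose product is conjugate to `c`. -/
abbrev ConjTup {G ι : Type} [Group G] (h : ι → G) (N : ℕ) (c : G) : Type :=
  {v : List ι // v.length = N ∧ IsConj c (v.map h).prod}

/-- Rotation of tuples. -/
def ConjTup.rot {G ι : Type} [Group G] (h : ι → G) (N : ℕ) (c : G) :
    Function.End (ConjTup h N c) := fun v =>
  ⟨v.1.rotate 1, by simp [v.2.1], by
    obtain ⟨l, hl, hc⟩ := v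
    refine hc.trans ?_
    cases l with
    | nil => simp
    | cons a l =>
      simp only [List.rotate_cons_succ, List.rotate_zero, List.map_append, List.map_cons,
        List.map_nil, List.prod_append, List.prod_cons, List.prod_nil, mul_one]
      rw [isConj_iff]
      exact ⟨(h a)⁻¹, by group⟩⟩

lemma ConjTup.rot_pow {G ι : Type} [Group G] (h : ι → G) (N : ℕ) (c : G) (k : ℕ)
    (v : ConjTup h N c) : ((ConjTup.rot h N c ^ k) v).1 = v.1.rotate k := by
  induction k with
  | zero =>
    rw [pow_zero, List.rotate_zero]
    rfl
  | succ k ih =>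
    rw [pow_succ']
    change ((ConjTup.rot h N c ^ k) v).1.rotate 1 = _
    rw [ih, List.rotate_rotate]

open Classical in
lemma card_conjTup {G ι : Type} [Group G] [Fintype ι] [Nonempty ι] (h : ι → G) (p n : ℕ)
    (hp : p.Prime) (c : G) :
    Nat.card (ConjTup h (p ^ n) c) ≡
      Nat.card {i : ι // IsConj c (h i ^ p ^ n)} [MOD p] := by
  have := Fact.mk hp
  have : Finite (ConjTup h (p ^ n) c) :=
    Finite.of_injective (β := List.Vector ι (p ^ n)) (fun v => ⟨v.1, v.2.1⟩) (by
      intro a b hab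
      exact Subtype.ext (congrArg (fun w : List.Vector ι (p ^ n) => w.toList) hab))
  have := Fintype.ofFinite (ConjTup h (p ^ n) c)
  have key := Equiv.Perm.card_fixedPoints_modEq (f := ConjTup.rot h (p ^ n) c) (p := p) (n := n)
    (by
      funext v
      apply Subtype.ext
      rw [ConjTup.rot_pow]
      have := v.1.rotate_length
      rw [v.2.1] at this
      exact this)
  rw [Fintype.card_eq_nat_card, @Fintype.card_eq_nat_card _ (_)] at key
  refine key.trans ?_
  have e : {i : ι // IsConj c (h i ^ p ^ n)} ≃ Function.fixedPoints (ConjTup.rot h (p ^ n) c) := by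
    refine Equiv.ofBijective (fun i => ⟨⟨List.replicate (p ^ n) i.1, by simp, by simpa using i.2⟩,
      Subtype.ext (by simp [ConjTup.rot])⟩) ⟨?_, ?_⟩
    · intro a b hab
      have h1 := congrArg (fun z => z.1.1) hab
      exact Subtype.ext (List.replicate_right_injective (pow_ne_zero n hp.ne_zero) h1)
    · rintro ⟨⟨l, hl, hc⟩, hf⟩
      have h1 : l.rotate 1 = l := congrArg Subtype.val hf
      obtain ⟨i, hi⟩ := List.rotate_one_eq_self_iff_eq_replicate.mp h1
      rw [hl] at hi
      subst hi
      exact ⟨⟨i, by simpa using hc⟩, rfl⟩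
  rw [Nat.card_congr e]

open Classical in
lemma nilp_count (p : ℕ) (hp : p.Prime) (F : Type) [Field F] [CharP F p]
    (G : Type) [Group G] [Fintype G] {ι : Type} [Fintype ι] [Nonempty ι] (h : ι → G) (n : ℕ)
    (hn : (∑ i, MonoidAlgebra.of F G (h i)) ^ p ^ n = 0) (c : G) :
    p ∣ Nat.card {i : ι // IsConj c (h i ^ p ^ n)} := by
  rw [sum_pow_eq_sum_vector] at hn
  have h1 : ∀ v : List.Vector ι (p ^ n),
      (v.toList.map (fun i => MonoidAlgebra.of F G (h i))).prod =
        MonoidAlgebra.of F G (v.toList.map h).prod := by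
    intro v
    rw [map_list_prod, List.map_map]
    rfl
  simp_rw [h1] at hn
  let φ : MonoidAlgebra F G →+ F :=
    { toFun := fun a => ∑ y, if IsConj c y then a.coeff y else 0
      map_zero' := by simp
      map_add' := fun a b => by
        rw [← Finset.sum_add_distrib]
        refine Finset.sum_congr rfl fun y _ => ?_
        split_ifs <;> simp }
  have hφ : ∀ g, φ (MonoidAlgebra.of F G g) = if IsConj c g then 1 else 0 := by
    intro g
    change (∑ y, if IsConj c y then (MonoidAlgebra.of F G g).coeff y else 0) = _
    rw [Finset.sum_eq_single g]
    · simp [MonoidAlgebra.of]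
    · intro b _ hb
      simp [MonoidAlgebra.of, hb.symm]
    · simp
  have h2 := congrArg φ hn
  rw [map_sum, map_zero] at h2
  simp_rw [hφ] at h2
  rw [Finset.sum_boole, CharP.cast_eq_zero_iff F p] at h2
  rw [← Fintype.card_subtype, ← Nat.card_eq_fintype_card] at h2
  have e : {v : List.Vector ι (p ^ n) // IsConj c (v.toList.map h).prod} ≃
      ConjTup h (p ^ n) c :=
    { toFun := fun v => ⟨v.1.1, v.1.2, v.2⟩
      invFun := fun v => ⟨⟨v.1, v.2.1⟩, v.2.2⟩
      left_inv := fun v => rfl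
      right_inv := fun v => rfl }
  rw [Nat.card_congr e] at h2
  exact ((card_conjTup h p n hp c).dvd_iff dvd_rfl).mp h2

lemma conj_step (p : ℕ) (hp : p.Prime) (F : Type) [Field F] [CharP F p]
    (G : Type) [Group G] [Fintype G] (g x : G) (n : ℕ)
    (hn : (MonoidAlgebra.of F G g * ∑ i ∈ Finset.range p, (MonoidAlgebra.of F G x) ^ i)
      ^ p ^ n = 0) : IsConj (g ^ p ^ n) ((g * x) ^ p ^ n) := by
  have : NeZero p := ⟨hp.ne_zero⟩
  have h1 : MonoidAlgebra.of F G g * ∑ i ∈ Finset.range p, (MonoidAlgebra.of F G x) ^ i =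
      ∑ i : Fin p, MonoidAlgebra.of F G (g * x ^ (i : ℕ)) := by
    rw [← Fin.sum_univ_eq_sum_range (fun i => (MonoidAlgebra.of F G x) ^ i), Finset.mul_sum]
    exact Finset.sum_congr rfl fun i _ => by rw [map_mul, map_pow]
  rw [h1] at hn
  have h2 := nilp_count p hp F G (fun i : Fin p => g * x ^ (i : ℕ)) n hn (g ^ p ^ n)
  have : Nonempty {i : Fin p // IsConj (g ^ p ^ n) ((g * x ^ (i : ℕ)) ^ p ^ n)} :=
    ⟨⟨0, by rw [Fin.val_zero, pow_zero, mul_one]⟩⟩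
  have h3 := Nat.le_of_dvd Nat.card_pos h2
  by_contra hcon
  have h4 : Nat.card {i : Fin p // IsConj (g ^ p ^ n) ((g * x ^ (i : ℕ)) ^ p ^ n)}
      < Nat.card (Fin p) := by
    classical
    rw [Nat.card_eq_fintype_card, Nat.card_eq_fintype_card]
    refine Fintype.card_subtype_lt (x := ⟨1, hp.one_lt⟩) ?_
    simpa using hcon
  rw [Nat.card_fin] at h4
  omega

lemma mem_jacobson (p : ℕ) (hp : p.Prime) (F : Type) [Field F] [CharP F p]
    (G : Type) [Group G] [Fintype G]
    (hall : ∀ S : ModuleCat.{0} (MonoidAlgebra F G), IsSimpleModule (MonoidAlgebra F G) S →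
      Module.finrank F (RestrictScalars F (MonoidAlgebra F G) S) < p)
    (x : G) (hx : x ^ p = 1) :
    ∑ i ∈ Finset.range p, (MonoidAlgebra.of F G x) ^ i ∈
      Ideal.jacobson (⊥ : Ideal (MonoidAlgebra F G)) := by
  have := Fact.mk hp
  rw [Ideal.jacobson, Ideal.mem_sInf]
  rintro M ⟨-, hM⟩
  have hS : IsSimpleModule (MonoidAlgebra F G) (MonoidAlgebra F G ⧸ M) :=
    isSimpleModule_iff_isCoatom.mpr hM.out
  have hd := hall (ModuleCat.of _ (MonoidAlgebra F G ⧸ M)) hS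
  have hd' : Module.finrank F (MonoidAlgebra F G ⧸ M) < p := by
    let e : (MonoidAlgebra F G ⧸ M) ≃ₗ[F] RestrictScalars F (MonoidAlgebra F G)
        (ModuleCat.of (MonoidAlgebra F G) (MonoidAlgebra F G ⧸ M)) :=
      { toFun := fun m => m
        invFun := fun m => m
        left_inv := fun _ => rfl
        right_inv := fun _ => rfl
        map_add' := fun _ _ => rfl
        map_smul' := fun r m => by
          obtain ⟨a, rfl⟩ := Submodule.Quotient.mk_surjective M m
          change Submodule.Quotient.mk (p := M) (r • a) =
            Submodule.Quotient.mk (p := M) ((algebraMap F (MonoidAlgebra F G) r) * a)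
          rw [Algebra.smul_def] }
    rw [e.finrank_eq]
    exact hd
  have : Module.Finite F (MonoidAlgebra F G ⧸ M) :=
    Module.Finite.trans (MonoidAlgebra F G) _
  have hg := geom_eq_sub_one_pow p hp F (MonoidAlgebra F G) (MonoidAlgebra.of F G x)
  let ρ := Algebra.lsmul F F (MonoidAlgebra F G ⧸ M) (A := MonoidAlgebra F G)
  have h0 : (ρ (MonoidAlgebra.of F G x - 1)) ^ (p - 1) = 0 := by
    apply nilp_pow_finrank F _ _ _ _ (by omega)
    refine ⟨p, ?_⟩
    rw [← map_pow]
    have : (MonoidAlgebra.of F G x - 1) ^ p = 0 := by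
      obtain ⟨k, hk⟩ : ∃ k, p = k + 1 := ⟨p - 1, by have := hp.one_le; omega⟩
      have h5 : (MonoidAlgebra.of F G x - 1) ^ p =
          (MonoidAlgebra.of F G x - 1) ^ (p - 1) * (MonoidAlgebra.of F G x - 1) := by
        rw [← pow_succ, Nat.sub_add_cancel hp.one_le]
      rw [h5, ← hg, geom_sum_mul, ← map_pow, hx, map_one, sub_self]
    rw [this, map_zero]
  rw [← map_pow, ← hg] at h0
  have h1 := LinearMap.congr_fun h0 (Submodule.Quotient.mk 1)
  have h2 : Submodule.Quotient.mk (p := M)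
      ((∑ i ∈ Finset.range p, (MonoidAlgebra.of F G x) ^ i) * 1) = 0 := h1
  rw [mul_one] at h2
  exact (Submodule.Quotient.mk_eq_zero M).mp h2

/-- Let `G` be a finite group, `p` a prime, and `F` an algebraically
closed field of characteristic `p`.  Suppose `O_p(G) = 1`, that `p` divides `|G|`, and
that every proper section `H/N` of `G` (with `H ≤ G`, `N ⊴ H` and `|H/N| < |G|`) has a
normal Sylow `p`-subgroup.  Then `G` has a simple `FG`-module of dimension at least `p`. -/
theorem exists_simple_module_of_dim_ge_p
    (p : ℕ) (hp : p.Prime)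
    (F : Type) [Field F] [IsAlgClosed F] [CharP F p]
    (G : Type) [Group G] [Fintype G]
    (hO : pRadical p G = ⊥) (hdvd : p ∣ Fintype.card G)
    (hsection : ∀ (H : Subgroup G) (N : Subgroup H) [N.Normal],
      Nat.card (H ⧸ N) < Nat.card G →
        ∃ Q : Sylow p (H ⧸ N), (Q : Subgroup (H ⧸ N)).Normal) :
    ∃ S : ModuleCat.{0} (MonoidAlgebra F G), IsSimpleModule (MonoidAlgebra F G) S ∧
      p ≤ Module.finrank F (RestrictScalars F (MonoidAlgebra F G) S) := by
  by_contra hcon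
  push Not at hcon
  have := Fact.mk hp
  have : IsArtinianRing (MonoidAlgebra F G) := IsArtinianRing.of_finite F _
  obtain ⟨m, hm⟩ := IsArtinianRing.isNilpotent_jacobson_bot (R := MonoidAlgebra F G)
  have step : ∀ g x : G, x ^ p = 1 → IsConj (g ^ p ^ m) ((g * x) ^ p ^ m) := by
    intro g x hx
    apply conj_step p hp F G g x m
    have h1 := Ideal.mul_mem_left _ (MonoidAlgebra.of F G g) (mem_jacobson p hp F G hcon x hx)
    have h2 := Ideal.pow_mem_pow h1 m
    rw [hm] at h2
    exact pow_eq_zero_of_le (Nat.lt_pow_self hp.one_lt).le h2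
  let N : Subgroup G := Subgroup.normalClosure {x | x ^ p = 1}
  have hmem : ∀ g ∈ N, g ^ p ^ m = 1 := by
    intro g hg
    have hN : N = Subgroup.closure {x | x ^ p = 1} := by
      change Subgroup.closure _ = _
      congr 1
      ext y
      rw [Group.mem_conjugatesOfSet_iff]
      constructor
      · rintro ⟨a, ha, hy⟩
        obtain ⟨c, rfl⟩ := isConj_iff.mp hy
        change _ ^ p = 1
        rw [conj_pow, show a ^ p = 1 from ha]
        simp
      · exact fun hy => ⟨y, hy, IsConj.refl y⟩
    rw [hN] at hg
    induction hg using Subgroup.closure_induction_right with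
    | one => simp
    | mul_right a _ b hb ih =>
      have := step a b hb
      rw [ih] at this
      exact isConj_one_right.mp this
    | mul_inv_cancel a _ b hb ih =>
      have := step a b⁻¹ (by rw [inv_pow, show b ^ p = 1 from hb, inv_one])
      rw [ih] at this
      exact isConj_one_right.mp this
  have hNp : IsPGroup p N := fun g => ⟨m, Subtype.ext (by simpa using hmem g.1 g.2)⟩
  have hle : N ≤ pRadical p G :=
    le_iSup_of_le N (le_iSup_of_le Subgroup.normalClosure_normal (le_iSup_of_le hNp le_rfl))
  rw [hO, le_bot_iff] at hle
  obtain ⟨x, hx⟩ := exists_prime_orderOf_dvd_card p hdvd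
  have hxN : x ∈ N := Subgroup.subset_normalClosure (show x ^ p = 1 by rw [← hx, pow_orderOf_eq_one])
  rw [hle, Subgroup.mem_bot] at hxN
  rw [hxN, orderOf_one] at hx
  exact hp.one_lt.ne hx
end
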